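/- Let y be a quasi shell solution and suppose C_l > 0 is a constant such that p(r) ≥ C_l γ(r)^{q+1}/r⁴ for all r ∈ [R₀, 2R₀] with γ(r) ≥ 0. Then γ(r)^{q+1} ≤ r²/(4πC_l) for all r ∈ [R₀, 2R₀]; equivalently γ(r) ≤ C_γ r^{2/(q+1)} with C_γ = (4πC_l)^{−1/(q+1)}. -/

import Mathlib

open MeasureTheory Real Set Filter

/-- The constant `c_ℓ = 2π ∫₀¹ s^ℓ (1-s)^{-1/2} ds`. -/
noncomputable def cConst (ℓ : ℝ) : ℝ :=
  2 * π * ∫ s in Set.Ioc (0 : ℝ) 1, s ^ ℓ / Real.sqrt (1 - s)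

/-- Energy density of the massless Einstein--Vlasov ansatz. -/
noncomputable def rho (k ℓ L0 : ℝ) (y : ℝ → ℝ) (r : ℝ) : ℝ :=
  cConst ℓ * r ^ (2 * ℓ) *
    ∫ ε in Set.Ioc (Real.sqrt L0 / r) (Real.exp (y r)),
      (1 - ε * Real.exp (-(y r))) ^ k * ε ^ 2 * (ε ^ 2 - L0 / r ^ 2) ^ (ℓ + 1 / 2)

/-- Radial pressure of the massless Einstein--Vlasov ansatz. -/
noncomputable def pres (k ℓ L0 : ℝ) (y : ℝ → ℝ) (r : ℝ) : ℝ :=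
  (cConst ℓ / (2 * ℓ + 3)) * r ^ (2 * ℓ) *
    ∫ ε in Set.Ioc (Real.sqrt L0 / r) (Real.exp (y r)),
      (1 - ε * Real.exp (-(y r))) ^ k * (ε ^ 2 - L0 / r ^ 2) ^ (ℓ + 3 / 2)

/-- The Hawking mass `m(r) = 4π ∫₀ʳ s² ϱ(s) ds`. -/
noncomputable def hawkingMass (k ℓ L0 : ℝ) (y : ℝ → ℝ) (r : ℝ) : ℝ :=
  4 * π * ∫ s in Set.Ioc (0 : ℝ) r, s ^ 2 * rho k ℓ L0 y s

/-- The characteristic function `γ(r) = y(r) - (1/2) ln (L₀ / r²)`. -/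
noncomputable def charFn (L0 : ℝ) (y : ℝ → ℝ) (r : ℝ) : ℝ :=
  y r - (1 / 2) * Real.log (L0 / r ^ 2)

/-- The inner radius `R₀ = √L₀ e^{-y(0)}`. -/
noncomputable def innerRadius (L0 : ℝ) (y : ℝ → ℝ) : ℝ :=
  Real.sqrt L0 * Real.exp (-(y 0))

/-- A quasi shell solution of the massless Einstein--Vlasov system. -/
def QuasiShell (k ℓ L0 : ℝ) (y : ℝ → ℝ) : Prop :=
  ContDiffOn ℝ 1 y (Set.Ici 0) ∧
  ∀ r > 0, 2 * hawkingMass k ℓ L0 y r / r < 1 ∧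
    HasDerivAt y
      (-(1 - 2 * hawkingMass k ℓ L0 y r / r)⁻¹ *
        (4 * π * r * pres k ℓ L0 y r + hawkingMass k ℓ L0 y r / r ^ 2)) r

theorem cConst_nonneg (ℓ : ℝ) : 0 ≤ cConst ℓ := by
  unfold cConst
  refine mul_nonneg (by positivity) (setIntegral_nonneg measurableSet_Ioc ?_)
  intro s hs
  exact div_nonneg (Real.rpow_nonneg hs.1.le _) (Real.sqrt_nonneg _)

theorem base_facts {L0 : ℝ} (hL : 0 < L0) {r ε Y : ℝ} (hr : 0 < r)
    (h : ε ∈ Set.Ioc (Real.sqrt L0 / r) (Real.exp Y)) :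
    0 ≤ 1 - ε * Real.exp (-Y) ∧ 0 ≤ ε ^ 2 - L0 / r ^ 2 := by
  constructor
  · have h1 : ε * Real.exp (-Y) ≤ Real.exp Y * Real.exp (-Y) :=
      mul_le_mul_of_nonneg_right h.2 (Real.exp_pos _).le
    rw [← Real.exp_add] at h1
    simp at h1
    linarith
  · have h0 : 0 ≤ Real.sqrt L0 / r := by positivity
    have h1 : (Real.sqrt L0 / r) ^ 2 ≤ ε ^ 2 := pow_le_pow_left₀ h0 h.1.le 2
    rw [div_pow, Real.sq_sqrt hL.le] at h1
    linarith

theorem rho_nonneg (k ℓ : ℝ) {L0 : ℝ} (hL : 0 < L0) (y : ℝ → ℝ) {r : ℝ} (hr : 0 < r) :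
    0 ≤ rho k ℓ L0 y r := by
  unfold rho
  refine mul_nonneg (mul_nonneg (cConst_nonneg ℓ) (Real.rpow_nonneg hr.le _))
    (setIntegral_nonneg measurableSet_Ioc ?_)
  intro ε hε
  obtain ⟨h1, h2⟩ := base_facts hL hr hε
  exact mul_nonneg (mul_nonneg (Real.rpow_nonneg h1 _) (sq_nonneg _)) (Real.rpow_nonneg h2 _)

theorem pres_nonneg (k ℓ : ℝ) (hl : -(1 / 2) ≤ ℓ) {L0 : ℝ} (hL : 0 < L0) (y : ℝ → ℝ) {r : ℝ}
    (hr : 0 < r) : 0 ≤ pres k ℓ L0 y r := by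
  unfold pres
  refine mul_nonneg (mul_nonneg (div_nonneg (cConst_nonneg ℓ) (by linarith))
    (Real.rpow_nonneg hr.le _)) (setIntegral_nonneg measurableSet_Ioc ?_)
  intro ε hε
  obtain ⟨h1, h2⟩ := base_facts hL hr hε
  exact mul_nonneg (Real.rpow_nonneg h1 _) (Real.rpow_nonneg h2 _)

theorem hawkingMass_nonneg (k ℓ : ℝ) {L0 : ℝ} (hL : 0 < L0) (y : ℝ → ℝ) (r : ℝ) :
    0 ≤ hawkingMass k ℓ L0 y r := by
  unfold hawkingMass
  refine mul_nonneg (by positivity) (setIntegral_nonneg measurableSet_Ioc ?_)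
  intro s hs
  exact mul_nonneg (sq_nonneg _) (rho_nonneg k ℓ hL y hs.1)

theorem deriv_bound (k ℓ : ℝ) (hl : -(1 / 2) ≤ ℓ) {L0 : ℝ} (hL : 0 < L0) (y : ℝ → ℝ) {r : ℝ}
    (hr : 0 < r) (h : 2 * hawkingMass k ℓ L0 y r / r < 1) :
    -(1 - 2 * hawkingMass k ℓ L0 y r / r)⁻¹ *
        (4 * π * r * pres k ℓ L0 y r + hawkingMass k ℓ L0 y r / r ^ 2) ≤
      -(4 * π * r * pres k ℓ L0 y r) := by
  have hm := hawkingMass_nonneg k ℓ hL y r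
  have hP := pres_nonneg k ℓ hl hL y hr
  have hm1 : 0 ≤ 2 * hawkingMass k ℓ L0 y r / r := by positivity
  have hm2 : 0 ≤ hawkingMass k ℓ L0 y r / r ^ 2 := by positivity
  have hA : 0 ≤ 4 * π * r * pres k ℓ L0 y r := by positivity
  have hi : 1 ≤ (1 - 2 * hawkingMass k ℓ L0 y r / r)⁻¹ :=
    (one_le_inv₀ (by linarith)).2 (by linarith)
  nlinarith [mul_le_mul_of_nonneg_right hi (add_nonneg hA hm2)]

/-- If `p(r) ≥ C_l γ(r)^{q+1}/r⁴` on `[R₀,2R₀]` where `γ ≥ 0`, then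
`γ(r)^{q+1} ≤ r²/(4πC_l)`, equivalently `γ(r) ≤ C_γ r^{2/(q+1)}`, on `[R₀,2R₀]`. -/
theorem charFn_power_bound (k ℓ L0 : ℝ) (hk : 0 ≤ k) (hl : -(1 / 2) ≤ ℓ) (hL : 0 < L0)
    (y : ℝ → ℝ) (hy : QuasiShell k ℓ L0 y) (Cl : ℝ) (hCl : 0 < Cl)
    (hp : ∀ r, innerRadius L0 y ≤ r → r ≤ 2 * innerRadius L0 y →
      0 ≤ charFn L0 y r →
      Cl * charFn L0 y r ^ (k + ℓ + 3 / 2 + 1) / r ^ 4 ≤ pres k ℓ L0 y r) :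
    ∀ r, innerRadius L0 y ≤ r → r ≤ 2 * innerRadius L0 y →
      (0 ≤ charFn L0 y r →
        charFn L0 y r ^ (k + ℓ + 3 / 2 + 1) ≤ r ^ 2 / (4 * π * Cl)) ∧
      charFn L0 y r ≤
        (4 * π * Cl) ^ (-(1 / (k + ℓ + 3 / 2 + 1))) * r ^ (2 / (k + ℓ + 3 / 2 + 1)) := by
  obtain ⟨hC, hode⟩ := hy
  set n : ℝ := k + ℓ + 3 / 2 + 1 with hn
  have hn0 : 0 < n := by rw [hn]; linarith
  set R := innerRadius L0 y with hR
  have hsq : 0 < Real.sqrt L0 := Real.sqrt_pos.2 hL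
  have hR0 : 0 < R := by rw [hR]; unfold innerRadius; positivity
  have hK : 0 < 4 * π * Cl := by positivity
  set B : ℝ → ℝ := fun r => (4 * π * Cl) ^ (-(1 / n)) * r ^ (2 / n) with hB
  have hBn : ∀ r, 0 < r → B r ^ n = r ^ 2 / (4 * π * Cl) := by
    intro r hr
    simp only [hB]
    rw [Real.mul_rpow (by positivity) (by positivity), ← Real.rpow_mul hK.le,
      ← Real.rpow_mul hr.le, div_mul_cancel₀ _ hn0.ne']
    have : -(1 / n) * n = -1 := by field_simp
    rw [this, Real.rpow_neg_one, Real.rpow_two]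
    field_simp
  have hBpos : ∀ r, 0 < r → 0 < B r := by
    intro r hr
    simp only [hB]
    positivity
  -- monotonicity of y
  have hanti : AntitoneOn y (Set.Ici 0) := by
    refine antitoneOn_of_deriv_nonpos (convex_Ici 0) hC.continuousOn ?_ ?_
    · intro x hx
      rw [interior_Ici] at hx
      exact (hode x hx).2.differentiableAt.differentiableWithinAt
    · intro x hx
      rw [interior_Ici] at hx
      have hx' : 0 < x := hx
      rw [(hode x hx).2.deriv]
      refine (deriv_bound k ℓ hl hL y hx' (hode x hx).1).trans ?_
      have := pres_nonneg k ℓ hl hL y hx'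
      have : 0 ≤ 4 * π * x * pres k ℓ L0 y x := by positivity
      linarith
  have hchar : ∀ r, 0 < r → charFn L0 y r = y r - (1 / 2) * Real.log L0 + Real.log r := by
    intro r hr
    unfold charFn
    rw [Real.log_div hL.ne' (by positivity), Real.log_pow]
    push_cast
    ring
  have hder : ∀ r, 0 < r → HasDerivAt (charFn L0 y)
      (-(1 - 2 * hawkingMass k ℓ L0 y r / r)⁻¹ *
        (4 * π * r * pres k ℓ L0 y r + hawkingMass k ℓ L0 y r / r ^ 2) + r⁻¹) r := by
    intro r hr
    have h1 := ((hode r hr).2.sub_const ((1 / 2) * Real.log L0)).add (Real.hasDerivAt_log hr.ne')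
    refine h1.congr_of_eventuallyEq ?_
    filter_upwards [lt_mem_nhds hr] with x hx
    simpa using hchar x hx
  have hstart : charFn L0 y R ≤ 0 := by
    have h1 : y R ≤ y 0 := hanti (Set.mem_Ici.2 le_rfl) (Set.mem_Ici.2 hR0.le) hR0.le
    have h2 : Real.log R = (1 / 2) * Real.log L0 - y 0 := by
      rw [hR]
      unfold innerRadius
      rw [Real.log_mul hsq.ne' (Real.exp_pos _).ne', Real.log_exp, Real.log_sqrt hL.le]
      ring
    rw [hchar R hR0, h2]
    linarith
  have hBder : ∀ r, 0 < r → HasDerivAt B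
      ((4 * π * Cl) ^ (-(1 / n)) * (2 / n * r ^ (2 / n - 1))) r := by
    intro r hr
    exact (Real.hasDerivAt_rpow_const (Or.inl hr.ne')).const_mul _
  have key : ∀ ⦃r⦄, r ∈ Set.Icc R (2 * R) → charFn L0 y r ≤ B r := by
    refine image_le_of_deriv_right_lt_deriv_boundary'
      (f' := fun r => -(1 - 2 * hawkingMass k ℓ L0 y r / r)⁻¹ *
        (4 * π * r * pres k ℓ L0 y r + hawkingMass k ℓ L0 y r / r ^ 2) + r⁻¹)
      (B' := fun r => (4 * π * Cl) ^ (-(1 / n)) * (2 / n * r ^ (2 / n - 1))) ?_ ?_ ?_ ?_ ?_ ?_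
    · intro x hx
      exact (hder x (hR0.trans_le hx.1)).continuousAt.continuousWithinAt
    · intro x hx
      exact (hder x (hR0.trans_le hx.1)).hasDerivWithinAt
    · exact hstart.trans (hBpos R hR0).le
    · intro x hx
      exact (hBder x (hR0.trans_le hx.1)).continuousAt.continuousWithinAt
    · intro x hx
      exact (hBder x (hR0.trans_le hx.1)).hasDerivWithinAt
    · intro x hx heq
      have hx0 : 0 < x := hR0.trans_le hx.1
      have h1 := hp x hx.1 hx.2.le (by rw [heq]; exact (hBpos x hx0).le)
      rw [heq, hBn x hx0] at h1
      have h2 := deriv_bound k ℓ hl hL y hx0 (hode x hx0).1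
      have h3 : x⁻¹ ≤ 4 * π * x * pres k ℓ L0 y x := by
        have h4 := mul_le_mul_of_nonneg_left h1 (show 0 ≤ 4 * π * x by positivity)
        have h5 : 4 * π * x * (Cl * (x ^ 2 / (4 * π * Cl)) / x ^ 4) = x⁻¹ := by
          field_simp
        rwa [h5] at h4
      have h6 : 0 < (4 * π * Cl) ^ (-(1 / n)) * (2 / n * x ^ (2 / n - 1)) := by positivity
      linarith
  intro r hr1 hr2
  have hr0 : 0 < r := hR0.trans_le hr1
  have hk' := key ⟨hr1, hr2⟩
  refine ⟨fun h0 => ?_, hk'⟩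
  rw [← hBn r hr0]
  exact Real.rpow_le_rpow h0 hk' hn0.le
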